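/- Let ε,b > 0 and let c:(−ε,b) → ℝ^{n+2} be smooth with ⟨c(t),c(t)⟩ = 0, c(t) ≠ 0 and ⟨c′(t),c′(t)⟩ = 1 for all t. Let λ ∈ ℝ with 2λ > 1, fix p ∈ (0,b), and let T:(0,b) → End(ℝ^{n+2}) be differentiable with T(p) = id and T′(t) = (λ/t²)·(T(t)∘(c(t)∧c′(t))) for all t ∈ (0,b). Then: (i) the curve γ(t) := T(t)(c(t)) does not converge projectively as t → 0⁺ (for no nonzero x ∈ ℝ^{n+2} and choice of nonzero reals r(t) does r(t)·γ(t) → x); and (ii) there is a 3-dimensional linear subspace W ⊆ ℝ^{n+2}, on which the Minkowski form is nondegenerate of signature (2,1), such that a nonzero vector x ∈ ℝ^{n+2} is a projective accumulation point of γ at 0 if and only if x ∈ W and ⟨x,x⟩ = 0 (a limit circle). -/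

import Mathlib

open scoped BigOperators Topology
open Filter Set MeasureTheory

noncomputable section

abbrev E (n : ℕ) := EuclideanSpace ℝ (Fin (n + 2))

/-- Minkowski inner product of signature (n+1,1). -/
def mink {n : ℕ} (x y : E n) : ℝ :=
  ∑ i, (if i = Fin.last (n + 1) then (-1 : ℝ) else 1) * x i * y i

variable {n : ℕ}

lemma mink_comm (x y : E n) : mink x y = mink y x :=
  Finset.sum_congr rfl fun i _ => by ring

lemma mink_add_right (v x y : E n) : mink v (x + y) = mink v x + mink v y := by
  simp [mink, mul_add, Finset.sum_add_distrib]

lemma mink_smul_right (v : E n) (c : ℝ) (x : E n) : mink v (c • x) = c * mink v x := by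
  unfold mink
  rw [Finset.mul_sum]
  refine Finset.sum_congr rfl fun i _ => ?_
  simp only [PiLp.smul_apply, smul_eq_mul]
  ring

lemma mink_add_left (x y v : E n) : mink (x + y) v = mink x v + mink y v := by
  rw [mink_comm, mink_add_right, mink_comm v x, mink_comm v y]

lemma mink_smul_left (c : ℝ) (x v : E n) : mink (c • x) v = c * mink x v := by
  rw [mink_comm, mink_smul_right, mink_comm v x]

/-- `v ∧ w` as an endomorphism: `x ↦ ⟨v,x⟩ w − ⟨w,x⟩ v`. -/
def wedge {n : ℕ} (v w : E n) : E n →L[ℝ] E n :=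
  LinearMap.toContinuousLinearMap
    { toFun := fun x => mink v x • w - mink w x • v
      map_add' := by
        intro x y
        simp only [mink_add_right, add_smul]
        abel
      map_smul' := by
        intro c x
        simp only [mink_smul_right, RingHom.id_apply, mul_smul, smul_sub] }

/-- rank one endomorphism `vw* : x ↦ ⟨x,w⟩ v`. -/
def rankOne {n : ℕ} (v w : E n) : E n →L[ℝ] E n :=
  LinearMap.toContinuousLinearMap
    { toFun := fun x => mink x w • v
      map_add' := by
        intro x y
        simp only [mink_add_left, add_smul]
      map_smul' := by
        intro c x
        simp only [mink_smul_left, RingHom.id_apply, mul_smul] }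

/-- A nonzero `x` is a projective accumulation point at `0` of a curve
`γ : (0,b) → ℝ^{n+2} ∖ {0}` if some sequence `tᵢ → 0⁺` in `(0,b)` and reals `rᵢ`
satisfy `rᵢ • γ (tᵢ) → x`. -/
def projAccum {n : ℕ} (b : ℝ) (γ : ℝ → E n) (x : E n) : Prop :=
  ∃ (ts : ℕ → ℝ) (rs : ℕ → ℝ), (∀ i, ts i ∈ Set.Ioo (0:ℝ) b) ∧
    Tendsto ts atTop (𝓝 0) ∧ Tendsto (fun i => rs i • γ (ts i)) atTop (𝓝 x)

/-!
Put `w = √(2 * lam - 1)`. At `t = 0` the transport equation is an Euler system, and in the frame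
`cosVec`, `sinVec`, `axisVec` built from `c`, `c'`, `c''` it becomes, up to an integrable error, the
rotation of the first two members with angular velocity `w / t`; the third is almost constant. After
undoing the rotation by the angle `w * log t`, the transported frame therefore converges to some
`(u₁, u₂, u₃)`, which is a Lorentz frame because the transport is isometric. As
`(w / t) • c t = cosVec w c t + axisVec w c t`, this gives
`(w / t) • T t (c t) = cos (w * log t) • u₁ + sin (w * log t) • u₂ + u₃ + o(1)`. Since
`w * log t → -∞`, the curve winds around this circle of light lines infinitely often.
-/

section SingularSystem

variable {F G : Type*} [NormedAddCommGroup F] [NormedSpace ℝ F]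
  [NormedAddCommGroup G] [NormedSpace ℝ G]

lemma mul_norm_le_of_norm_deriv_le_div_sq {Y Y' : ℝ → G} {s p K : ℝ} (hs : 0 < s) (hsp : s ≤ p)
    (hK : 0 ≤ K) (hY : ∀ u ∈ Icc s p, HasDerivAt Y (Y' u) u)
    (hY' : ∀ u ∈ Icc s p, ‖Y' u‖ ≤ K / u ^ 2) :
    s * ‖Y s‖ ≤ p * ‖Y p‖ + K := by
  have hpos : ∀ u ∈ Icc s p, u ≠ 0 := fun u hu => (hs.trans_le hu.1).ne'
  have hB : ∀ u ∈ Icc s p, HasDerivAt (fun u => K / s - K / u) (K / u ^ 2) u := fun u hu =>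
    (((hasDerivAt_inv (hpos u hu)).const_mul K).const_sub (K / s)).congr_deriv (by ring)
  have hdiff : ‖Y p - Y s‖ ≤ K / s - K / p :=
    image_norm_le_of_norm_deriv_right_le_deriv_boundary'
      (f := fun u => Y u - Y s) (B := fun u => K / s - K / u)
      (fun u hu => ((hY u hu).sub_const _).continuousAt.continuousWithinAt)
      (fun u hu => ((hY u (Ico_subset_Icc_self hu)).sub_const _).hasDerivWithinAt)
      (by simp) (fun u hu => (hB u hu).continuousAt.continuousWithinAt)
      (fun u hu => (hB u (Ico_subset_Icc_self hu)).hasDerivWithinAt)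
      (fun u hu => hY' u (Ico_subset_Icc_self hu)) (right_mem_Icc.2 hsp)
  have hKp : 0 ≤ K / p := div_nonneg hK (hs.le.trans hsp)
  calc s * ‖Y s‖ ≤ s * (‖Y p‖ + K / s) := by gcongr; linarith [norm_le_insert (Y p) (Y s)]
    _ = s * ‖Y p‖ + K := by field_simp
    _ ≤ p * ‖Y p‖ + K := by gcongr

lemma norm_le_of_coupled_deriv_bounds {X X' : ℝ → F} {Y Y' : ℝ → G} {p C : ℝ} (hC : 0 ≤ C)
    (hCp : C ^ 2 * p ≤ 1 / 2) (hX : ∀ t ∈ Ioc 0 p, HasDerivAt X (X' t) t)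
    (hY : ∀ t ∈ Ioc 0 p, HasDerivAt Y (Y' t) t)
    (hX' : ∀ t ∈ Ioc 0 p, ‖X' t‖ ≤ C * (t * ‖Y t‖))
    (hY' : ∀ t ∈ Ioc 0 p, ‖Y' t‖ ≤ C * (‖X t‖ / t ^ 2)) {t : ℝ} (ht : t ∈ Ioc 0 p) :
    ‖X t‖ ≤ 2 * (‖X p‖ + C * p ^ 2 * ‖Y p‖) := by
  have hsub : Icc t p ⊆ Ioc 0 p := fun s hs => ⟨ht.1.trans_le hs.1, hs.2⟩
  have hp : 0 < p := ht.1.trans_le ht.2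
  obtain ⟨m, hm, hmax⟩ := isCompact_Icc.exists_isMaxOn (nonempty_Icc.2 ht.2)
    (fun s hs => (hX s (hsub hs)).continuousAt.norm.continuousWithinAt)
  have hmax : ∀ s ∈ Icc t p, ‖X s‖ ≤ ‖X m‖ := hmax
  have hYle : ∀ s ∈ Icc t p, s * ‖Y s‖ ≤ p * ‖Y p‖ + C * ‖X m‖ := by
    intro s hs
    have hsubs : Icc s p ⊆ Icc t p := Icc_subset_Icc_left hs.1
    refine mul_norm_le_of_norm_deriv_le_div_sq (hsub hs).1 hs.2 (by positivity)
      (fun u hu => hY u (hsub (hsubs hu))) fun u hu => ?_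
    rw [mul_div_assoc]
    exact (hY' u (hsub (hsubs hu))).trans (by gcongr; exact hmax u (hsubs hu))
  have hdiff : ‖X m - X p‖ ≤ C * (p * ‖Y p‖ + C * ‖X m‖) * ‖m - p‖ :=
    (convex_Icc t p).norm_image_sub_le_of_norm_hasDerivWithin_le
      (fun s hs => (hX s (hsub hs)).hasDerivWithinAt)
      (fun s hs => (hX' s (hsub hs)).trans (by gcongr; exact hYle s hs))
      (right_mem_Icc.2 ht.2) hm
  have hmp : ‖m - p‖ ≤ p := by
    rw [Real.norm_eq_abs, abs_le]
    constructor <;> linarith [(hsub hm).1, hm.2]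
  have hXm : ‖X m‖ ≤ ‖X p‖ + C * p ^ 2 * ‖Y p‖ + C ^ 2 * p * ‖X m‖ := by
    calc ‖X m‖ ≤ ‖X p‖ + ‖X m - X p‖ := norm_le_insert' _ _
      _ ≤ ‖X p‖ + C * (p * ‖Y p‖ + C * ‖X m‖) * p := by grw [hdiff, hmp]
      _ = ‖X p‖ + C * p ^ 2 * ‖Y p‖ + C ^ 2 * p * ‖X m‖ := by ring
  have hhalf : C ^ 2 * p * ‖X m‖ ≤ 1 / 2 * ‖X m‖ := by gcongr
  linarith [hmax t (left_mem_Icc.2 ht.2)]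

lemma exists_tendsto_nhdsGT_of_norm_deriv_le [CompleteSpace F] {f f' : ℝ → F} {a p C : ℝ}
    (hap : a < p) (hf : ∀ t ∈ Ioc a p, HasDerivAt f (f' t) t) (hf' : ∀ t ∈ Ioc a p, ‖f' t‖ ≤ C) :
    ∃ L, Tendsto f (𝓝[>] a) (𝓝 L) := by
  have hlip : LipschitzOnWith C.toNNReal f (Ioc a p) :=
    (convex_Ioc a p).lipschitzOnWith_of_nnnorm_hasDerivWithin_le
      (fun t ht => (hf t ht).hasDerivWithinAt) fun t ht => NNReal.coe_le_coe.1 <| by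
        simpa only [coe_nnnorm] using (hf' t ht).trans (Real.le_coe_toNNReal C)
  have hcauchy : Cauchy (𝓝[>] a) := cauchy_nhds.mono nhdsWithin_le_nhds
  exact cauchy_map_iff_exists_tendsto.1 <| hcauchy.map_of_le hlip.uniformContinuousOn <|
    le_principal_iff.2 (Ioc_mem_nhdsGT hap)

-- Integrating the second bound gives `‖Y‖ = O(1 / t)` as soon as `X` is bounded, and then the
-- derivative of `X` is bounded; `C ^ 2 * p ≤ 1 / 2` makes the resulting estimate of `X` in terms of
-- itself a contraction.
lemma exists_tendsto_of_coupled_deriv_bounds [CompleteSpace F] {X X' : ℝ → F} {Y Y' : ℝ → G}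
    {p C : ℝ} (hp : 0 < p) (hC : 0 ≤ C) (hCp : C ^ 2 * p ≤ 1 / 2)
    (hX : ∀ t ∈ Ioc 0 p, HasDerivAt X (X' t) t) (hY : ∀ t ∈ Ioc 0 p, HasDerivAt Y (Y' t) t)
    (hX' : ∀ t ∈ Ioc 0 p, ‖X' t‖ ≤ C * (t * ‖Y t‖))
    (hY' : ∀ t ∈ Ioc 0 p, ‖Y' t‖ ≤ C * (‖X t‖ / t ^ 2)) :
    ∃ L, Tendsto X (𝓝[>] 0) (𝓝 L) := by
  set M := 2 * (‖X p‖ + C * p ^ 2 * ‖Y p‖)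
  have hM : ∀ t ∈ Ioc 0 p, ‖X t‖ ≤ M := fun t =>
    norm_le_of_coupled_deriv_bounds hC hCp hX hY hX' hY'
  refine exists_tendsto_nhdsGT_of_norm_deriv_le hp hX (C := C * (p * ‖Y p‖ + C * M))
    fun t ht => (hX' t ht).trans (mul_le_mul_of_nonneg_left ?_ hC)
  have hsub : Icc t p ⊆ Ioc 0 p := fun s hs => ⟨ht.1.trans_le hs.1, hs.2⟩
  refine mul_norm_le_of_norm_deriv_le_div_sq ht.1 ht.2 (by positivity)
    (fun u hu => hY u (hsub hu)) fun u hu => ?_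
  rw [mul_div_assoc]
  exact (hY' u (hsub hu)).trans (by gcongr; exact hM u (hsub hu))

theorem exists_tendsto_of_coupled_deriv_isBigO [CompleteSpace F] {X X' : ℝ → F} {Y Y' : ℝ → G}
    (hX : ∀ᶠ t in 𝓝[>] 0, HasDerivAt X (X' t) t) (hY : ∀ᶠ t in 𝓝[>] 0, HasDerivAt Y (Y' t) t)
    (hX' : X' =O[𝓝[>] 0] fun t => t * ‖Y t‖) (hY' : Y' =O[𝓝[>] 0] fun t => ‖X t‖ / t ^ 2) :
    ∃ L, Tendsto X (𝓝[>] 0) (𝓝 L) := by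
  obtain ⟨A, hA, hXA⟩ := hX'.exists_nonneg
  obtain ⟨B, -, hYB⟩ := hY'.exists_nonneg
  have hsmall : ∀ᶠ t in 𝓝[>] (0 : ℝ), max A B ^ 2 * t ≤ 1 / 2 := by
    have h0 : Tendsto (fun t => max A B ^ 2 * t) (𝓝[>] 0) (𝓝 0) :=
      (Continuous.tendsto' (by fun_prop) 0 0 (mul_zero _)).mono_left nhdsWithin_le_nhds
    exact h0.eventually_le_const (by norm_num)
  obtain ⟨p, hp, hall⟩ := mem_nhdsGT_iff_exists_Ioc_subset.1
    (hX.and (hY.and (hXA.bound.and (hYB.bound.and hsmall))))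
  refine exists_tendsto_of_coupled_deriv_bounds (p := p) (C := max A B) hp
    (hA.trans (le_max_left A B)) (hall (right_mem_Ioc.2 hp)).2.2.2.2
    (fun t ht => (hall ht).1) (fun t ht => (hall ht).2.1)
    (fun t ht => (hall ht).2.2.1.trans ?_) fun t ht => (hall ht).2.2.2.1.trans ?_
  · have := ht.1
    rw [Real.norm_of_nonneg (by positivity)]
    gcongr
    exact le_max_left A B
  · rw [Real.norm_of_nonneg (by positivity)]
    gcongr
    exact le_max_right A B

end SingularSystem

section Minkowski

lemma mink_sub_right (v x y : E n) : mink v (x - y) = mink v x - mink v y := by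
  rw [sub_eq_add_neg, ← neg_one_smul ℝ y, mink_add_right, mink_smul_right]
  ring

lemma mink_sub_left (x y v : E n) : mink (x - y) v = mink x v - mink y v := by
  rw [mink_comm, mink_sub_right, mink_comm v x, mink_comm v y]

/-- The time reflection, which turns the Euclidean inner product into the Minkowski form. -/
def timeReflection : E n →L[ℝ] E n :=
  ((ℝ ∙ (EuclideanSpace.single (Fin.last (n + 1)) 1 : E n))ᗮ.reflection : E n ≃L[ℝ] E n)

lemma timeReflection_timeReflection (x : E n) : timeReflection (timeReflection x) = x :=
  Submodule.reflection_reflection _ x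

lemma norm_timeReflection (x : E n) : ‖timeReflection x‖ = ‖x‖ :=
  LinearIsometryEquiv.norm_map _ x

lemma timeReflection_apply (x : E n) (i : Fin (n + 2)) :
    timeReflection x i = (if i = Fin.last (n + 1) then -1 else 1) * x i := by
  have hx : timeReflection x = -(ℝ ∙ EuclideanSpace.single (Fin.last (n + 1)) 1).reflection x :=
    Submodule.reflection_orthogonal_apply _ x
  rw [hx, Submodule.reflection_singleton_apply]
  split_ifs with hi
  · subst hi
    simp [EuclideanSpace.inner_single_left]
    ring
  · simp [hi]

lemma mink_eq_inner (x y : E n) : mink x y = inner ℝ (timeReflection x) y := by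
  simp only [mink, PiLp.inner_apply, timeReflection_apply, Real.inner_apply]

lemma tendsto_mink {α : Type*} {l : Filter α} {f g : α → E n} {x y : E n}
    (hf : Tendsto f l (𝓝 x)) (hg : Tendsto g l (𝓝 y)) :
    Tendsto (fun a => mink (f a) (g a)) l (𝓝 (mink x y)) := by
  simp only [mink_eq_inner]
  exact ((timeReflection.continuous.tendsto x).comp hf).inner hg

lemma hasDerivAt_mink {f g : ℝ → E n} {f' g' : E n} {t : ℝ}
    (hf : HasDerivAt f f' t) (hg : HasDerivAt g g' t) :
    HasDerivAt (fun s => mink (f s) (g s)) (mink (f t) g' + mink f' (g t)) t := by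
  simp only [mink_eq_inner]
  exact (timeReflection.hasFDerivAt.comp_hasDerivAt t hf).inner ℝ hg

lemma abs_mink_le (x y : E n) : |mink x y| ≤ ‖x‖ * ‖y‖ := by
  simpa only [mink_eq_inner, norm_timeReflection] using
    abs_real_inner_le_norm (timeReflection x) y

lemma eq_of_forall_mink_eq {x y : E n} (h : ∀ z, mink z x = mink z y) : x = y :=
  ext_inner_left ℝ fun z => by
    simpa only [mink_eq_inner, timeReflection_timeReflection] using h (timeReflection z)

/-- The adjoint of an endomorphism with respect to the Minkowski form. -/
def minkAdjoint (A : E n →L[ℝ] E n) : E n →L[ℝ] E n :=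
  timeReflection * star A * timeReflection

lemma mink_minkAdjoint_right (A : E n →L[ℝ] E n) (x y : E n) :
    mink x (minkAdjoint A y) = mink (A x) y := by
  calc mink x (minkAdjoint A y)
      = inner ℝ (timeReflection (timeReflection (A.adjoint (timeReflection y)))) x := by
        rw [mink_comm, mink_eq_inner]; rfl
    _ = inner ℝ (timeReflection y) (A x) := by
        rw [timeReflection_timeReflection, ContinuousLinearMap.adjoint_inner_left]
    _ = mink (A x) y := by rw [← mink_eq_inner, mink_comm]

lemma minkAdjoint_one : minkAdjoint (1 : E n →L[ℝ] E n) = 1 :=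
  ContinuousLinearMap.ext fun x => eq_of_forall_mink_eq fun z => mink_minkAdjoint_right 1 z x

lemma minkAdjoint_mul (A B : E n →L[ℝ] E n) :
    minkAdjoint (A * B) = minkAdjoint B * minkAdjoint A :=
  ContinuousLinearMap.ext fun x => eq_of_forall_mink_eq fun z => by
    simp only [mink_minkAdjoint_right, mul_apply_eq_comp]

lemma minkAdjoint_eq_neg {A : E n →L[ℝ] E n} (hA : ∀ x y, mink (A x) y = -mink x (A y)) :
    minkAdjoint A = -A :=
  ContinuousLinearMap.ext fun x => eq_of_forall_mink_eq fun z => by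
    rw [mink_minkAdjoint_right, hA, neg_apply, ← neg_one_smul ℝ (A x),
      mink_smul_right, neg_one_mul]

lemma hasDerivAt_minkAdjoint {T : ℝ → E n →L[ℝ] E n} {T' : E n →L[ℝ] E n} {t : ℝ}
    (hT : HasDerivAt T T' t) : HasDerivAt (fun s => minkAdjoint (T s)) (minkAdjoint T') t :=
  (hT.star.const_mul _).mul_const _

theorem mink_map_map_of_hasDerivAt_mul {T A : ℝ → E n →L[ℝ] E n} {s : Set ℝ} {p : ℝ}
    (hs : IsOpen s) (hs' : IsPreconnected s) (hp : p ∈ s) (hTp : T p = 1)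
    (hT : ∀ t ∈ s, HasDerivAt T (T t * A t) t)
    (hA : ∀ t ∈ s, ∀ x y, mink (A t x) y = -mink x (A t y)) {t : ℝ} (ht : t ∈ s) (x y : E n) :
    mink (T t x) (T t y) = mink x y := by
  have hderiv : ∀ u ∈ s, HasDerivAt (fun u => T u * minkAdjoint (T u)) 0 u := fun u hu =>
    ((hT u hu).mul (hasDerivAt_minkAdjoint (hT u hu))).congr_deriv <| by
      rw [minkAdjoint_mul, minkAdjoint_eq_neg (hA u hu), mul_assoc, ← mul_add, ← add_mul,
        add_neg_cancel, zero_mul, mul_zero]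
  have hright : T t * minkAdjoint (T t) = 1 := by
    rw [hs.is_const_of_deriv_eq_zero hs'
      (fun u hu => (hderiv u hu).differentiableAt.differentiableWithinAt)
      (fun u hu => (hderiv u hu).deriv) ht hp, hTp, minkAdjoint_one, one_mul]
  have : IsDedekindFiniteMonoid (E n →L[ℝ] E n) :=
    .of_injective (ContinuousLinearMap.toLinearMapRingHom (R₁ := ℝ) (M₁ := E n))
      ContinuousLinearMap.coe_injective
  have hleft : minkAdjoint (T t) (T t y) = y := congr($(mul_eq_one_comm.1 hright) y)
  rw [← mink_minkAdjoint_right, hleft]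

lemma wedge_apply (v w x : E n) : wedge v w x = mink v x • w - mink w x • v := rfl

lemma mink_wedge_left (v w x y : E n) : mink (wedge v w x) y = -mink x (wedge v w y) := by
  simp only [wedge_apply, mink_sub_left, mink_sub_right, mink_smul_left, mink_smul_right,
    mink_comm x w, mink_comm x v]
  ring

theorem mink_map_map_of_hasDerivAt_smul_mul_wedge {T : ℝ → E n →L[ℝ] E n} {a : ℝ → ℝ}
    {v w : ℝ → E n} {s : Set ℝ} {p : ℝ} (hs : IsOpen s) (hs' : IsPreconnected s) (hp : p ∈ s)
    (hTp : T p = 1) (hT : ∀ t ∈ s, HasDerivAt T (a t • (T t * wedge (v t) (w t))) t) {t : ℝ}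
    (ht : t ∈ s) (x y : E n) : mink (T t x) (T t y) = mink x y :=
  mink_map_map_of_hasDerivAt_mul (A := fun t => a t • wedge (v t) (w t)) hs hs' hp hTp
    (fun t ht => (hT t ht).congr_deriv (ContinuousLinearMap.comp_smul _ _ _).symm)
    (fun t _ x y => by
      simp only [smul_apply, mink_smul_left, mink_smul_right, mink_wedge_left, mul_neg]) ht x y

lemma norm_mul_wedge_le (A : E n →L[ℝ] E n) (v w : E n) :
    ‖A * wedge v w‖ ≤ ‖v‖ * ‖A w‖ + ‖w‖ * ‖A v‖ := by
  refine ContinuousLinearMap.opNorm_le_bound _ (by positivity) fun x => ?_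
  calc ‖(A * wedge v w) x‖ = ‖mink v x • A w - mink w x • A v‖ := by
        simp [wedge_apply]
    _ ≤ ‖mink v x • A w‖ + ‖mink w x • A v‖ := norm_sub_le _ _
    _ = |mink v x| * ‖A w‖ + |mink w x| * ‖A v‖ := by simp only [norm_smul, Real.norm_eq_abs]
    _ ≤ ‖v‖ * ‖x‖ * ‖A w‖ + ‖w‖ * ‖x‖ * ‖A v‖ := by gcongr <;> exact abs_mink_le _ _
    _ = (‖v‖ * ‖A w‖ + ‖w‖ * ‖A v‖) * ‖x‖ := by ring

end Minkowski

section FlatLift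

variable {c : ℝ → E n} {s : Set ℝ} {t w : ℝ}

/-- A flat light-cone lift of a regular curve in the conformal sphere, over an open set of
parameters and of the class of differentiability that the moving frame below requires. -/
structure IsFlatLiftOn (c : ℝ → E n) (s : Set ℝ) : Prop where
  isOpen : IsOpen s
  contDiffOn : ContDiffOn ℝ 3 c s
  null : ∀ t ∈ s, mink (c t) (c t) = 0
  unit : ∀ t ∈ s, mink (deriv c t) (deriv c t) = 1

namespace IsFlatLiftOn

lemma contDiffOn_deriv (h : IsFlatLiftOn c s) : ContDiffOn ℝ 2 (deriv c) s :=
  h.contDiffOn.deriv_of_isOpen h.isOpen (by norm_num)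

lemma contDiffOn_deriv_deriv (h : IsFlatLiftOn c s) : ContDiffOn ℝ 1 (deriv (deriv c)) s :=
  h.contDiffOn_deriv.deriv_of_isOpen h.isOpen (by norm_num)

lemma continuousAt_deriv_deriv_deriv (h : IsFlatLiftOn c s) (ht : t ∈ s) :
    ContinuousAt (deriv (deriv (deriv c))) t :=
  (h.contDiffOn_deriv_deriv.continuousOn_deriv_of_isOpen h.isOpen le_rfl).continuousAt
    (h.isOpen.mem_nhds ht)

lemma hasDerivAt (h : IsFlatLiftOn c s) (ht : t ∈ s) : HasDerivAt c (deriv c t) t :=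
  ((h.contDiffOn.contDiffAt (h.isOpen.mem_nhds ht)).differentiableAt (by norm_num)).hasDerivAt

lemma hasDerivAt_deriv (h : IsFlatLiftOn c s) (ht : t ∈ s) :
    HasDerivAt (deriv c) (deriv (deriv c) t) t :=
  ((h.contDiffOn_deriv.contDiffAt (h.isOpen.mem_nhds ht)).differentiableAt
    (by norm_num)).hasDerivAt

lemma hasDerivAt_deriv_deriv (h : IsFlatLiftOn c s) (ht : t ∈ s) :
    HasDerivAt (deriv (deriv c)) (deriv (deriv (deriv c)) t) t :=
  ((h.contDiffOn_deriv_deriv.contDiffAt (h.isOpen.mem_nhds ht)).differentiableAt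
    (by norm_num)).hasDerivAt

lemma mink_self_deriv (h : IsFlatLiftOn c s) (ht : t ∈ s) : mink (c t) (deriv c t) = 0 := by
  have hconst : (fun u => mink (c u) (c u)) =ᶠ[𝓝 t] fun _ => 0 :=
    (h.isOpen.eventually_mem ht).mono h.null
  have hd := ((hasDerivAt_mink (h.hasDerivAt ht) (h.hasDerivAt ht)).congr_of_eventuallyEq
    hconst.symm).unique (hasDerivAt_const t 0)
  linarith [mink_comm (c t) (deriv c t)]

lemma mink_deriv_deriv_deriv (h : IsFlatLiftOn c s) (ht : t ∈ s) :
    mink (deriv c t) (deriv (deriv c) t) = 0 := by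
  have hconst : (fun u => mink (deriv c u) (deriv c u)) =ᶠ[𝓝 t] fun _ => 1 :=
    (h.isOpen.eventually_mem ht).mono h.unit
  have hd := ((hasDerivAt_mink (h.hasDerivAt_deriv ht)
    (h.hasDerivAt_deriv ht)).congr_of_eventuallyEq hconst.symm).unique (hasDerivAt_const t 1)
  linarith [mink_comm (deriv c t) (deriv (deriv c) t)]

lemma mink_self_deriv_deriv (h : IsFlatLiftOn c s) (ht : t ∈ s) :
    mink (c t) (deriv (deriv c) t) = -1 := by
  have hconst : (fun u => mink (c u) (deriv c u)) =ᶠ[𝓝 t] fun _ => 0 :=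
    (h.isOpen.eventually_mem ht).mono fun u hu => h.mink_self_deriv hu
  have hd := ((hasDerivAt_mink (h.hasDerivAt ht)
    (h.hasDerivAt_deriv ht)).congr_of_eventuallyEq hconst.symm).unique (hasDerivAt_const t 0)
  linarith [h.unit t ht]

end IsFlatLiftOn

/-- The member of the moving frame of `c` that is asymptotically timelike of length `-1` and, after
transport by the primitive of parameter `(w ^ 2 + 1) / 2`, almost constant near `t = 0`. -/
def axisVec (w : ℝ) (c : ℝ → E n) (t : ℝ) : E n :=
  w⁻¹ • (((w ^ 2 + 1) / (2 * t)) • c t - deriv c t + t • deriv (deriv c) t)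

/-- The first of the two members of the moving frame of `c` that, after transport, rotate with
angular velocity `w / t`. -/
def cosVec (w : ℝ) (c : ℝ → E n) (t : ℝ) : E n :=
  (w / t) • c t - axisVec w c t

/-- The second of the two members of the moving frame of `c` that, after transport, rotate with
angular velocity `w / t`. -/
def sinVec (c : ℝ → E n) (t : ℝ) : E n :=
  deriv c t - t⁻¹ • c t

/-- The deviation of the moving frame of `c` from a Lorentz frame. -/
def frameDefect (w : ℝ) (c : ℝ → E n) (t : ℝ) : ℝ :=
  (t / w) ^ 2 * mink (deriv (deriv c) t) (deriv (deriv c) t)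

namespace IsFlatLiftOn

lemma mink_self_axisVec (h : IsFlatLiftOn c s) (ht : t ∈ s) :
    mink (c t) (axisVec w c t) = -t / w := by
  simp only [axisVec, mink_smul_right, mink_add_right, mink_sub_right, h.null t ht,
    h.mink_self_deriv ht, h.mink_self_deriv_deriv ht]
  ring

lemma mink_deriv_axisVec (h : IsFlatLiftOn c s) (ht : t ∈ s) :
    mink (deriv c t) (axisVec w c t) = -1 / w := by
  simp only [axisVec, mink_smul_right, mink_add_right, mink_sub_right, h.unit t ht,
    mink_comm _ (c t), h.mink_self_deriv ht, h.mink_deriv_deriv_deriv ht]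
  ring

lemma mink_axisVec_axisVec (h : IsFlatLiftOn c s) (ht : t ∈ s) (ht0 : t ≠ 0) (hw : w ≠ 0) :
    mink (axisVec w c t) (axisVec w c t) = -1 + frameDefect w c t := by
  have hsnd : mink (deriv (deriv c) t) (axisVec w c t)
      = w⁻¹ * (-(w ^ 2 + 1) / (2 * t) + t * mink (deriv (deriv c) t) (deriv (deriv c) t)) := by
    simp only [axisVec, mink_smul_right, mink_add_right, mink_sub_right,
      mink_comm _ (c t), mink_comm _ (deriv c t), h.mink_self_deriv_deriv ht,
      h.mink_deriv_deriv_deriv ht]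
    ring
  conv_lhs => enter [1]; rw [axisVec]
  simp only [mink_smul_left, mink_add_left, mink_sub_left, h.mink_self_axisVec ht,
    h.mink_deriv_axisVec ht, hsnd, frameDefect]
  field_simp
  ring

lemma mink_axisVec_cosVec (h : IsFlatLiftOn c s) (ht : t ∈ s) (ht0 : t ≠ 0) (hw : w ≠ 0) :
    mink (axisVec w c t) (cosVec w c t) = -frameDefect w c t := by
  rw [cosVec, mink_sub_right, h.mink_axisVec_axisVec ht ht0 hw, mink_smul_right, mink_comm,
    h.mink_self_axisVec ht]
  field_simp
  ring

lemma mink_axisVec_sinVec (h : IsFlatLiftOn c s) (ht : t ∈ s) (ht0 : t ≠ 0) :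
    mink (axisVec w c t) (sinVec c t) = 0 := by
  rw [mink_comm, sinVec, mink_sub_left, mink_smul_left, h.mink_self_axisVec ht,
    h.mink_deriv_axisVec ht]
  field_simp
  ring

lemma mink_cosVec_cosVec (h : IsFlatLiftOn c s) (ht : t ∈ s) (ht0 : t ≠ 0) (hw : w ≠ 0) :
    mink (cosVec w c t) (cosVec w c t) = 1 + frameDefect w c t := by
  have hsnd : mink (c t) (cosVec w c t) = t / w := by
    rw [cosVec, mink_sub_right, mink_smul_right, h.null t ht, h.mink_self_axisVec ht]
    ring
  conv_lhs => enter [1]; rw [cosVec]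
  rw [mink_sub_left, mink_smul_left, hsnd, h.mink_axisVec_cosVec ht ht0 hw]
  field_simp
  ring

lemma mink_cosVec_sinVec (h : IsFlatLiftOn c s) (ht : t ∈ s) (ht0 : t ≠ 0) :
    mink (cosVec w c t) (sinVec c t) = 0 := by
  rw [cosVec, mink_sub_left, h.mink_axisVec_sinVec ht ht0, mink_smul_left]
  simp [sinVec, mink_sub_right, mink_smul_right, h.null t ht, h.mink_self_deriv ht]

lemma mink_sinVec_sinVec (h : IsFlatLiftOn c s) (ht : t ∈ s) :
    mink (sinVec c t) (sinVec c t) = 1 := by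
  simp [sinVec, mink_sub_right, mink_smul_right, mink_sub_left, mink_smul_left, h.null t ht,
    h.mink_self_deriv ht, h.unit t ht, mink_comm _ (c t)]

lemma hasDerivAt_div_smul (h : IsFlatLiftOn c s) (ht : t ∈ s) (ht0 : t ≠ 0) (a : ℝ) :
    HasDerivAt (fun u => (a / u) • c u) ((a / t) • sinVec c t) t := by
  have hcoeff : HasDerivAt (fun u => a / u) (-a / t ^ 2) t :=
    ((hasDerivAt_inv ht0).const_mul a).congr_deriv (by ring)
  refine (hcoeff.smul (h.hasDerivAt ht)).congr_deriv ?_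
  rw [sinVec]
  match_scalars <;> field_simp

lemma hasDerivAt_axisVec (h : IsFlatLiftOn c s) (ht : t ∈ s) (ht0 : t ≠ 0) :
    HasDerivAt (axisVec w c)
      (w⁻¹ • (((w ^ 2 + 1) / (2 * t)) • sinVec c t + t • deriv (deriv (deriv c)) t)) t := by
  have hfst := h.hasDerivAt_div_smul ht ht0 ((w ^ 2 + 1) / 2)
  have hsnd := (hasDerivAt_id' t).smul (h.hasDerivAt_deriv_deriv ht)
  simp only [div_div] at hfst
  refine (((hfst.sub (h.hasDerivAt_deriv ht)).add hsnd).const_smul w⁻¹).congr_deriv ?_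
  module

lemma hasDerivAt_sinVec (h : IsFlatLiftOn c s) (ht : t ∈ s) (ht0 : t ≠ 0) :
    HasDerivAt (sinVec c) (deriv (deriv c) t - t⁻¹ • sinVec c t) t := by
  have hscale := h.hasDerivAt_div_smul ht ht0 1
  simp only [one_div] at hscale
  exact (h.hasDerivAt_deriv ht).sub hscale

end IsFlatLiftOn

lemma hasDerivAt_transport {T : ℝ → E n →L[ℝ] E n} {A : E n →L[ℝ] E n} {v : ℝ → E n} {v' : E n}
    {a : ℝ} (hT : HasDerivAt T (a • (T t * A)) t) (hv : HasDerivAt v v' t) :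
    HasDerivAt (fun u => T u (v u)) (T t (v' + a • A (v t))) t :=
  (hT.clm_apply hv).congr_deriv <| by
    simp [add_comm]

section Transport

variable {T : ℝ → E n →L[ℝ] E n}
  (hT : HasDerivAt T (((w ^ 2 + 1) / 2 / t ^ 2) • (T t * wedge (c t) (deriv c t))) t)

include hT

namespace IsFlatLiftOn

lemma hasDerivAt_map_axisVec (h : IsFlatLiftOn c s) (ht : t ∈ s) (ht0 : t ≠ 0) (hw : w ≠ 0) :
    HasDerivAt (fun u => T u (axisVec w c u)) ((t / w) • T t (deriv (deriv (deriv c)) t)) t := by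
  refine (hasDerivAt_transport hT (h.hasDerivAt_axisVec ht ht0)).congr_deriv ?_
  rw [← map_smul (T t), wedge_apply, h.mink_self_axisVec ht, h.mink_deriv_axisVec ht, sinVec]
  congr 1
  match_scalars <;> field_simp <;> ring

lemma hasDerivAt_map_cosVec (h : IsFlatLiftOn c s) (ht : t ∈ s) (ht0 : t ≠ 0) (hw : w ≠ 0) :
    HasDerivAt (fun u => T u (cosVec w c u))
      ((w / t) • T t (sinVec c t) - (t / w) • T t (deriv (deriv (deriv c)) t)) t := by
  have hscale : HasDerivAt (fun u => T u ((w / u) • c u)) ((w / t) • T t (sinVec c t)) t := by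
    refine (hasDerivAt_transport hT (h.hasDerivAt_div_smul ht ht0 w)).congr_deriv ?_
    simp [wedge_apply, mink_comm (deriv c t), h.null t ht, h.mink_self_deriv ht]
  simp only [cosVec, map_sub]
  exact hscale.sub (h.hasDerivAt_map_axisVec hT ht ht0 hw)

lemma hasDerivAt_map_sinVec (h : IsFlatLiftOn c s) (ht : t ∈ s) (ht0 : t ≠ 0) (hw : w ≠ 0) :
    HasDerivAt (fun u => T u (sinVec c u)) (-(w / t) • T t (cosVec w c t)) t := by
  have hc : mink (c t) (sinVec c t) = 0 := by
    simp [sinVec, mink_sub_right, mink_smul_right, h.null t ht, h.mink_self_deriv ht]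
  have hc' : mink (deriv c t) (sinVec c t) = 1 := by
    simp [sinVec, mink_sub_right, mink_smul_right, h.unit t ht, mink_comm _ (c t),
      h.mink_self_deriv ht]
  refine (hasDerivAt_transport hT (h.hasDerivAt_sinVec ht ht0)).congr_deriv ?_
  rw [← map_smul (T t), wedge_apply, hc, hc', cosVec, axisVec, sinVec]
  congr 1
  match_scalars <;> field_simp <;> ring

end IsFlatLiftOn

end Transport

end FlatLift

section Unwinding

variable {F : Type*} [NormedAddCommGroup F] [NormedSpace ℝ F] {x y : ℝ → F} {r : F} {θ : ℝ → ℝ}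
  {ω t : ℝ}

lemma hasDerivAt_cos_smul_sub_sin_smul (hθ : HasDerivAt θ ω t) (hx : HasDerivAt x (ω • y t + r) t)
    (hy : HasDerivAt y (-ω • x t) t) :
    HasDerivAt (fun u => Real.cos (θ u) • x u - Real.sin (θ u) • y u) (Real.cos (θ t) • r) t :=
  ((hθ.cos.smul hx).sub (hθ.sin.smul hy)).congr_deriv <| by module

lemma hasDerivAt_sin_smul_add_cos_smul (hθ : HasDerivAt θ ω t) (hx : HasDerivAt x (ω • y t + r) t)
    (hy : HasDerivAt y (-ω • x t) t) :
    HasDerivAt (fun u => Real.sin (θ u) • x u + Real.cos (θ u) • y u) (Real.sin (θ t) • r) t :=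
  ((hθ.sin.smul hx).add (hθ.cos.smul hy)).congr_deriv <| by module

lemma cos_smul_add_sin_smul_unwind (φ : ℝ) (a b : F) :
    Real.cos φ • (Real.cos φ • a - Real.sin φ • b) + Real.sin φ • (Real.sin φ • a + Real.cos φ • b)
      = a :=
  calc _ = (Real.cos φ ^ 2 + Real.sin φ ^ 2) • a := by module
    _ = a := by rw [Real.cos_sq_add_sin_sq, one_smul]

lemma cos_smul_sub_sin_smul_unwind (φ : ℝ) (a b : F) :
    Real.cos φ • (Real.sin φ • a + Real.cos φ • b) - Real.sin φ • (Real.cos φ • a - Real.sin φ • b)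
      = b :=
  calc _ = (Real.cos φ ^ 2 + Real.sin φ ^ 2) • b := by module
    _ = b := by rw [Real.cos_sq_add_sin_sq, one_smul]

lemma norm_cos_smul_le (φ : ℝ) (v : F) :
    ‖Real.cos φ • v‖ ≤ ‖v‖ := by
  rw [norm_smul]
  exact mul_le_of_le_one_left (norm_nonneg v) (Real.abs_cos_le_one φ)

lemma norm_sin_smul_le (φ : ℝ) (v : F) :
    ‖Real.sin φ • v‖ ≤ ‖v‖ := by
  rw [norm_smul]
  exact mul_le_of_le_one_left (norm_nonneg v) (Real.abs_sin_le_one φ)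

end Unwinding

section UnwoundFrame

variable {c : ℝ → E n} {s : Set ℝ} {t w : ℝ} {T : ℝ → E n →L[ℝ] E n}

/-- The transported moving frame of `c`, its first two members being rotated back by the angle
`w * log t` so that all three have a limit at `0`. -/
def unwoundFrame (w : ℝ) (c : ℝ → E n) (T : ℝ → E n →L[ℝ] E n) (t : ℝ) : E n × E n × E n :=
  (Real.cos (w * Real.log t) • T t (cosVec w c t) - Real.sin (w * Real.log t) • T t (sinVec c t),
    Real.sin (w * Real.log t) • T t (cosVec w c t) + Real.cos (w * Real.log t) • T t (sinVec c t),
    T t (axisVec w c t))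

lemma map_cosVec_eq (w : ℝ) (c : ℝ → E n) (T : ℝ → E n →L[ℝ] E n) (t : ℝ) :
    T t (cosVec w c t) = Real.cos (w * Real.log t) • (unwoundFrame w c T t).1
      + Real.sin (w * Real.log t) • (unwoundFrame w c T t).2.1 :=
  (cos_smul_add_sin_smul_unwind _ _ _).symm

lemma map_sinVec_eq (w : ℝ) (c : ℝ → E n) (T : ℝ → E n →L[ℝ] E n) (t : ℝ) :
    T t (sinVec c t) = Real.cos (w * Real.log t) • (unwoundFrame w c T t).2.1
      - Real.sin (w * Real.log t) • (unwoundFrame w c T t).1 :=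
  (cos_smul_sub_sin_smul_unwind _ _ _).symm

lemma IsFlatLiftOn.hasDerivAt_unwoundFrame (h : IsFlatLiftOn c s) (ht : t ∈ s) (ht0 : t ≠ 0)
    (hw : w ≠ 0)
    (hT : HasDerivAt T (((w ^ 2 + 1) / 2 / t ^ 2) • (T t * wedge (c t) (deriv c t))) t) :
    HasDerivAt (unwoundFrame w c T)
      (Real.cos (w * Real.log t) • -((t / w) • T t (deriv (deriv (deriv c)) t)),
        Real.sin (w * Real.log t) • -((t / w) • T t (deriv (deriv (deriv c)) t)),
        (t / w) • T t (deriv (deriv (deriv c)) t)) t := by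
  have hθ : HasDerivAt (fun u => w * Real.log u) (w / t) t := (Real.hasDerivAt_log ht0).const_mul w
  have hcos := (h.hasDerivAt_map_cosVec hT ht ht0 hw).congr_deriv (sub_eq_add_neg _ _)
  have hsin := h.hasDerivAt_map_sinVec hT ht ht0 hw
  have hP := hasDerivAt_cos_smul_sub_sin_smul (y := fun u => T u (sinVec c u)) hθ hcos hsin
  have hQ := hasDerivAt_sin_smul_add_cos_smul (y := fun u => T u (sinVec c u)) hθ hcos hsin
  exact hP.prodMk (hQ.prodMk (h.hasDerivAt_map_axisVec hT ht ht0 hw))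

lemma norm_map_axisVec_le (w : ℝ) (c : ℝ → E n) (T : ℝ → E n →L[ℝ] E n) (t : ℝ) :
    ‖T t (axisVec w c t)‖ ≤ ‖unwoundFrame w c T t‖ :=
  (norm_snd_le (unwoundFrame w c T t).2).trans (norm_snd_le _)

lemma norm_map_cosVec_le (w : ℝ) (c : ℝ → E n) (T : ℝ → E n →L[ℝ] E n) (t : ℝ) :
    ‖T t (cosVec w c t)‖ ≤ 2 * ‖unwoundFrame w c T t‖ := by
  rw [map_cosVec_eq, two_mul]
  exact (norm_add_le _ _).trans <| add_le_add ((norm_cos_smul_le _ _).trans (norm_fst_le _))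
    ((norm_sin_smul_le _ _).trans ((norm_fst_le _).trans (norm_snd_le _)))

lemma norm_map_sinVec_le (w : ℝ) (c : ℝ → E n) (T : ℝ → E n →L[ℝ] E n) (t : ℝ) :
    ‖T t (sinVec c t)‖ ≤ 2 * ‖unwoundFrame w c T t‖ := by
  rw [map_sinVec_eq w, two_mul]
  exact (norm_sub_le _ _).trans <| add_le_add
    ((norm_cos_smul_le _ _).trans ((norm_fst_le _).trans (norm_snd_le _)))
    ((norm_sin_smul_le _ _).trans (norm_fst_le _))

lemma div_smul_eq_cosVec_add_axisVec (w : ℝ) (c : ℝ → E n) (t : ℝ) :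
    (w / t) • c t = cosVec w c t + axisVec w c t := by
  rw [cosVec, sub_add_cancel]

lemma norm_map_le_norm_unwoundFrame (hw : 0 < w) (ht0 : 0 < t) :
    ‖T t (c t)‖ ≤ 3 * t / w * ‖unwoundFrame w c T t‖ := by
  have hc : c t = (t / w) • (cosVec w c t + axisVec w c t) := by
    rw [← div_smul_eq_cosVec_add_axisVec, smul_smul, div_mul_div_cancel₀ hw.ne', div_self ht0.ne',
      one_smul]
  have hsum : ‖T t (cosVec w c t) + T t (axisVec w c t)‖ ≤ 3 * ‖unwoundFrame w c T t‖ := by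
    linarith [norm_add_le (T t (cosVec w c t)) (T t (axisVec w c t)), norm_map_cosVec_le w c T t,
      norm_map_axisVec_le w c T t]
  rw [hc, map_smul, map_add, norm_smul, Real.norm_of_nonneg (by positivity)]
  calc t / w * _ ≤ t / w * (3 * ‖unwoundFrame w c T t‖) := by gcongr
    _ = 3 * t / w * ‖unwoundFrame w c T t‖ := by ring

lemma norm_map_deriv_le_norm_unwoundFrame (hw : 0 < w) (ht0 : 0 < t) :
    ‖T t (deriv c t)‖ ≤ (2 + 3 / w) * ‖unwoundFrame w c T t‖ := by
  have hsum : ‖T t (sinVec c t) + t⁻¹ • T t (c t)‖ ≤ ‖T t (sinVec c t)‖ + t⁻¹ * ‖T t (c t)‖ := by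
    refine (norm_add_le _ _).trans_eq ?_
    rw [norm_smul, Real.norm_of_nonneg (by positivity)]
  calc ‖T t (deriv c t)‖ = ‖T t (sinVec c t) + t⁻¹ • T t (c t)‖ := by
        rw [← map_smul, ← map_add, sinVec, sub_add_cancel]
    _ ≤ 2 * ‖unwoundFrame w c T t‖ + t⁻¹ * (3 * t / w * ‖unwoundFrame w c T t‖) := by
        grw [hsum, norm_map_sinVec_le w, norm_map_le_norm_unwoundFrame hw ht0]
    _ = (2 + 3 / w) * ‖unwoundFrame w c T t‖ := by field_simp

namespace IsFlatLiftOn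

lemma isBigO_deriv_unwoundFrame (h : IsFlatLiftOn c s) (h0 : 0 ∈ s) :
    (fun t => (Real.cos (w * Real.log t) • -((t / w) • T t (deriv (deriv (deriv c)) t)),
        Real.sin (w * Real.log t) • -((t / w) • T t (deriv (deriv (deriv c)) t)),
        (t / w) • T t (deriv (deriv (deriv c)) t))) =O[𝓝[>] 0] fun t => t * ‖T t‖ := by
  have hthird : deriv (deriv (deriv c)) =O[𝓝[>] 0] fun _ => (1 : ℝ) :=
    ((h.continuousAt_deriv_deriv_deriv h0).mono_left nhdsWithin_le_nhds).isBigO_one ℝ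
  have hmap : (fun t => T t (deriv (deriv (deriv c)) t)) =O[𝓝[>] 0] fun t => ‖T t‖ * 1 :=
    (Asymptotics.isBigO_of_le _ fun t => by
      simpa using (T t).le_opNorm (deriv (deriv (deriv c)) t)).trans
    ((Asymptotics.isBigO_refl (fun t => ‖T t‖) _).mul hthird.norm_left)
  have hcoeff : (fun t => t / w) =O[𝓝[>] 0] fun t : ℝ => t := by
    simpa only [div_eq_inv_mul] using Asymptotics.isBigO_const_mul_self w⁻¹ (fun t : ℝ => t) _
  have haxis : (fun t => (t / w) • T t (deriv (deriv (deriv c)) t)) =O[𝓝[>] 0]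
      fun t => t * ‖T t‖ := by
    simpa only [mul_one, smul_eq_mul] using hcoeff.smul hmap
  refine (Asymptotics.isBigO_of_le _ fun t => ?_).trans haxis
  exact norm_prod_le_iff.2 ⟨(norm_cos_smul_le _ _).trans_eq (norm_neg _),
    norm_prod_le_iff.2 ⟨(norm_sin_smul_le _ _).trans_eq (norm_neg _), le_rfl⟩⟩

lemma isBigO_mul_wedge (h : IsFlatLiftOn c s) (h0 : 0 ∈ s) (hw : 0 < w) :
    (fun t => T t * wedge (c t) (deriv c t)) =O[𝓝[>] 0] fun t => ‖unwoundFrame w c T t‖ := by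
  have hc : c =O[𝓝[>] 0] fun _ => (1 : ℝ) :=
    ((h.hasDerivAt h0).continuousAt.mono_left nhdsWithin_le_nhds).isBigO_one ℝ
  have hc' : deriv c =O[𝓝[>] 0] fun _ => (1 : ℝ) :=
    ((h.hasDerivAt_deriv h0).continuousAt.mono_left nhdsWithin_le_nhds).isBigO_one ℝ
  have hTc : (fun t => T t (c t)) =O[𝓝[>] 0] fun t => ‖unwoundFrame w c T t‖ := by
    refine .of_bound (3 / w) ?_
    filter_upwards [Ioo_mem_nhdsGT one_pos] with t ht
    rw [norm_norm]
    refine (norm_map_le_norm_unwoundFrame hw ht.1).trans ?_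
    gcongr
    linarith [ht.2]
  have hTc' : (fun t => T t (deriv c t)) =O[𝓝[>] 0] fun t => ‖unwoundFrame w c T t‖ := by
    refine .of_bound (2 + 3 / w) ?_
    filter_upwards [self_mem_nhdsWithin] with t ht
    rw [norm_norm]
    exact norm_map_deriv_le_norm_unwoundFrame hw ht
  have hsum := (hc.norm_left.mul hTc'.norm_left).add (hc'.norm_left.mul hTc.norm_left)
  simp only [one_mul] at hsum
  exact (Asymptotics.isBigO_of_le _ fun t => (norm_mul_wedge_le (T t) _ _).trans
    (Real.le_norm_self _)).trans hsum

theorem exists_tendsto_unwoundFrame (h : IsFlatLiftOn c s) (h0 : 0 ∈ s) (hw : 0 < w)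
    (hT : ∀ᶠ t in 𝓝[>] 0,
      HasDerivAt T (((w ^ 2 + 1) / 2 / t ^ 2) • (T t * wedge (c t) (deriv c t))) t) :
    ∃ L, Tendsto (unwoundFrame w c T) (𝓝[>] 0) (𝓝 L) := by
  have hs : ∀ᶠ t in 𝓝[>] 0, t ∈ s := (h.isOpen.eventually_mem h0).filter_mono nhdsWithin_le_nhds
  have hinv : (fun t : ℝ => (w ^ 2 + 1) / 2 / t ^ 2) =O[𝓝[>] 0] fun t => (t ^ 2)⁻¹ :=
    Asymptotics.isBigO_const_mul_self _ _ _
  have hY := (hinv.smul (h.isBigO_mul_wedge (T := T) h0 hw)).congr_right fun t =>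
    (div_eq_inv_mul ‖unwoundFrame w c T t‖ (t ^ 2)).symm
  refine exists_tendsto_of_coupled_deriv_isBigO ?_ hT (h.isBigO_deriv_unwoundFrame (w := w) h0)
    hY
  filter_upwards [hs, hT, self_mem_nhdsWithin] with t ht hTt ht0
  exact h.hasDerivAt_unwoundFrame ht ht0.ne' hw.ne' hTt

end IsFlatLiftOn

end UnwoundFrame

section LorentzFrame

/-- A pseudo-orthonormal basis of a subspace of signature `(2, 1)`, the timelike vector last. -/
structure IsLorentzFrame (u₁ u₂ u₃ : E n) : Prop where
  mink₁₁ : mink u₁ u₁ = 1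
  mink₂₂ : mink u₂ u₂ = 1
  mink₃₃ : mink u₃ u₃ = -1
  mink₁₂ : mink u₁ u₂ = 0
  mink₁₃ : mink u₁ u₃ = 0
  mink₂₃ : mink u₂ u₃ = 0

/-- The circle in which the light cone of the span of a Lorentz frame meets the affine plane through
`u₃` that is parallel to `u₁` and `u₂`; its points represent all light lines of the span. -/
def lightCircle (u₁ u₂ u₃ : E n) (z : Circle) : E n :=
  (z : ℂ).re • u₁ + (z : ℂ).im • u₂ + u₃

variable {u₁ u₂ u₃ x : E n}

lemma continuous_lightCircle : Continuous (lightCircle u₁ u₂ u₃) := by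
  unfold lightCircle
  fun_prop

lemma lightCircle_exp (θ : ℝ) :
    lightCircle u₁ u₂ u₃ (Circle.exp θ) = Real.cos θ • u₁ + Real.sin θ • u₂ + u₃ := by
  rw [lightCircle, Circle.coe_exp, Complex.exp_ofReal_mul_I_re, Complex.exp_ofReal_mul_I_im]

lemma lightCircle_mem_span (z : Circle) :
    lightCircle u₁ u₂ u₃ z ∈ Submodule.span ℝ {u₁, u₂, u₃} :=
  Submodule.mem_span_triple.2 ⟨(z : ℂ).re, (z : ℂ).im, 1, by rw [one_smul, lightCircle]⟩

namespace IsLorentzFrame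

lemma mink_lincomb (h : IsLorentzFrame u₁ u₂ u₃) (a₁ a₂ a₃ b₁ b₂ b₃ : ℝ) :
    mink (a₁ • u₁ + a₂ • u₂ + a₃ • u₃) (b₁ • u₁ + b₂ • u₂ + b₃ • u₃)
      = a₁ * b₁ + a₂ * b₂ - a₃ * b₃ := by
  simp only [mink_add_left, mink_add_right, mink_smul_left, mink_smul_right, h.mink₁₁, h.mink₂₂,
    h.mink₃₃, h.mink₁₂, h.mink₁₃, h.mink₂₃, mink_comm u₂ u₁, mink_comm u₃ u₁, mink_comm u₃ u₂]
  ring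

lemma linearIndependent (h : IsLorentzFrame u₁ u₂ u₃) : LinearIndependent ℝ ![u₁, u₂, u₃] := by
  refine Fintype.linearIndependent_iff.2 fun a ha => ?_
  have hpair (b₁ b₂ b₃ : ℝ) : a 0 * b₁ + a 1 * b₂ - a 2 * b₃ = 0 := by
    rw [← h.mink_lincomb]
    simp only [Fin.sum_univ_three, Matrix.cons_val] at ha
    rw [ha, mink_eq_inner, map_zero, inner_zero_left]
  intro i
  fin_cases i
  · simpa using hpair 1 0 0
  · simpa using hpair 0 1 0
  · simpa using hpair 0 0 1

lemma finrank_span (h : IsLorentzFrame u₁ u₂ u₃) :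
    Module.finrank ℝ (Submodule.span ℝ ({u₁, u₂, u₃} : Set (E n))) = 3 := by
  have hrange : range ![u₁, u₂, u₃] = {u₁, u₂, u₃} := by
    simp only [Matrix.range_cons, Matrix.range_empty, union_empty, insert_eq]
  rw [← hrange]
  exact finrank_span_eq_card h.linearIndependent

lemma mink_lightCircle_self (h : IsLorentzFrame u₁ u₂ u₃) (z : Circle) :
    mink (lightCircle u₁ u₂ u₃ z) (lightCircle u₁ u₂ u₃ z) = 0 := by
  have hz : (z : ℂ).re * (z : ℂ).re + (z : ℂ).im * (z : ℂ).im = 1 := by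
    rw [← Complex.normSq_apply, Circle.normSq_coe]
  have := h.mink_lincomb (z : ℂ).re (z : ℂ).im 1 (z : ℂ).re (z : ℂ).im 1
  rw [one_smul, hz] at this
  simpa [lightCircle] using this

lemma mink_lightCircle_left (h : IsLorentzFrame u₁ u₂ u₃) (z : Circle) :
    mink u₁ (lightCircle u₁ u₂ u₃ z) = (z : ℂ).re := by
  simp [lightCircle, mink_add_right, mink_smul_right, h.mink₁₁, h.mink₁₂, h.mink₁₃]

lemma mink_lightCircle_right (h : IsLorentzFrame u₁ u₂ u₃) (z : Circle) :
    mink u₃ (lightCircle u₁ u₂ u₃ z) = -1 := by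
  simp [lightCircle, mink_add_right, mink_smul_right, h.mink₃₃, mink_comm u₃ u₁, mink_comm u₃ u₂,
    h.mink₁₃, h.mink₂₃]

lemma lightCircle_ne_zero (h : IsLorentzFrame u₁ u₂ u₃) (z : Circle) :
    lightCircle u₁ u₂ u₃ z ≠ 0 := fun h0 => by
  have := h.mink_lightCircle_right z
  rw [h0, mink_eq_inner, inner_zero_right] at this
  norm_num at this

lemma mem_span_and_null_iff (h : IsLorentzFrame u₁ u₂ u₃) :
    x ∈ Submodule.span ℝ {u₁, u₂, u₃} ∧ mink x x = 0
      ↔ ∃ (r : ℝ) (z : Circle), x = r • lightCircle u₁ u₂ u₃ z := by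
  constructor
  · rintro ⟨hx, hnull⟩
    obtain ⟨a₁, a₂, a₃, rfl⟩ := Submodule.mem_span_triple.1 hx
    rw [h.mink_lincomb] at hnull
    rcases eq_or_ne a₃ 0 with rfl | ha₃
    · obtain rfl : a₁ = 0 := by nlinarith
      obtain rfl : a₂ = 0 := by nlinarith
      exact ⟨0, 1, by simp⟩
    · have hz : ‖(⟨a₁ / a₃, a₂ / a₃⟩ : ℂ)‖ = 1 := by
        rw [← pow_eq_one_iff_of_nonneg (norm_nonneg _) two_ne_zero, Complex.sq_norm,
          Complex.normSq_mk]
        field_simp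
        linarith
      refine ⟨a₃, ⟨_, mem_sphere_zero_iff_norm.2 hz⟩, ?_⟩
      simp only [lightCircle]
      match_scalars <;> field_simp
  · rintro ⟨r, z, rfl⟩
    refine ⟨Submodule.smul_mem _ r (lightCircle_mem_span z), ?_⟩
    rw [mink_smul_left, mink_smul_right, h.mink_lightCircle_self, mul_zero, mul_zero]

lemma eq_zero_of_forall_exists_eq_smul (h : IsLorentzFrame u₁ u₂ u₃)
    (hx : ∀ z, ∃ r : ℝ, x = r • lightCircle u₁ u₂ u₃ z) : x = 0 := by
  obtain ⟨r, hr⟩ := hx 1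
  obtain ⟨r', hr'⟩ := hx (-1)
  have h₁ : r * 1 = r' * -1 := by
    simpa [mink_smul_right, h.mink_lightCircle_left] using congr(mink u₁ $(hr.symm.trans hr'))
  have h₃ : r * -1 = r' * -1 := by
    simpa [mink_smul_right, h.mink_lightCircle_right] using congr(mink u₃ $(hr.symm.trans hr'))
  obtain rfl : r = 0 := by linarith
  rw [hr, zero_smul]

end IsLorentzFrame

end LorentzFrame

section LogSpiral

variable {w : ℝ}

lemma frequently_exp_mul_log_eq (hw : 0 < w) (z : Circle) :
    ∃ᶠ t in 𝓝[>] 0, Circle.exp (w * Real.log t) = z := by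
  set θ : ℕ → ℝ := fun i => ((z : ℂ).arg - i * (2 * Real.pi)) / w
  have hθ : Tendsto θ atTop atBot :=
    (tendsto_atBot_add_const_left _ _ (tendsto_neg_atTop_atBot.comp
      (tendsto_natCast_atTop_atTop.atTop_mul_const Real.two_pi_pos))).atBot_div_const hw
  refine (Real.tendsto_exp_atBot_nhdsGT.comp hθ).frequently (.of_forall fun i => ?_)
  rw [Function.comp_apply, Real.log_exp, mul_div_cancel₀ _ hw.ne',
    Circle.periodic_exp.sub_nat_mul_eq, Circle.exp_arg]

lemma neBot_nhdsGT_inf_exp_mul_log_eq (hw : 0 < w) (z : Circle) :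
    NeBot (𝓝[>] 0 ⊓ 𝓟 {t | Circle.exp (w * Real.log t) = z}) :=
  frequently_mem_iff_neBot.1 (frequently_exp_mul_log_eq hw z)

end LogSpiral

section FrameLimit

variable {c : ℝ → E n} {s : Set ℝ} {t w : ℝ} {T : ℝ → E n →L[ℝ] E n}

lemma unwoundFrame_of_exp_eq_one (h : Circle.exp (w * Real.log t) = 1) :
    unwoundFrame w c T t = (T t (cosVec w c t), T t (sinVec c t), T t (axisVec w c t)) := by
  have hexp : Complex.exp (↑(w * Real.log t) * Complex.I) = 1 := by
    rw [← Circle.coe_exp, h, Circle.coe_one]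
  have hcos : Real.cos (w * Real.log t) = 1 := by
    rw [← Complex.exp_ofReal_mul_I_re, hexp, Complex.one_re]
  have hsin : Real.sin (w * Real.log t) = 0 := by
    rw [← Complex.exp_ofReal_mul_I_im, hexp, Complex.one_im]
  simp only [unwoundFrame, hcos, hsin, one_smul, zero_smul, sub_zero, zero_add]

namespace IsFlatLiftOn

lemma tendsto_frameDefect (h : IsFlatLiftOn c s) (h0 : 0 ∈ s) (w : ℝ) :
    Tendsto (frameDefect w c) (𝓝 0) (𝓝 0) := by
  have hcont := (h.hasDerivAt_deriv_deriv h0).continuousAt.tendsto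
  have hsq : Tendsto (fun t => (t / w) ^ 2) (𝓝 0) (𝓝 0) :=
    Continuous.tendsto' (by fun_prop) 0 0 (by simp)
  have hprod := hsq.mul (tendsto_mink hcont hcont)
  rw [zero_mul] at hprod
  exact hprod

theorem isLorentzFrame_of_tendsto_unwoundFrame (h : IsFlatLiftOn c s) (h0 : 0 ∈ s) (hw : 0 < w)
    (hT : ∀ᶠ t in 𝓝[>] 0, ∀ x y, mink (T t x) (T t y) = mink x y) {u₁ u₂ u₃ : E n}
    (hlim : Tendsto (unwoundFrame w c T) (𝓝[>] 0) (𝓝 (u₁, u₂, u₃))) :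
    IsLorentzFrame u₁ u₂ u₃ := by
  have := neBot_nhdsGT_inf_exp_mul_log_eq hw 1
  set l := 𝓝[>] 0 ⊓ 𝓟 {t | Circle.exp (w * Real.log t) = 1}
  have hl : l ≤ 𝓝[>] 0 := inf_le_left
  have hframe : Tendsto (fun t => (T t (cosVec w c t), T t (sinVec c t), T t (axisVec w c t))) l
      (𝓝 (u₁, u₂, u₃)) :=
    (hlim.mono_left hl).congr' <| mem_of_superset (mem_inf_of_right (mem_principal_self _))
      fun t ht => unwoundFrame_of_exp_eq_one ht
  have hcos := hframe.fst_nhds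
  have hsin := hframe.snd_nhds.fst_nhds
  have haxis := hframe.snd_nhds.snd_nhds
  have hdefect : Tendsto (frameDefect w c) l (𝓝 0) :=
    (h.tendsto_frameDefect h0 w).mono_left (hl.trans nhdsWithin_le_nhds)
  have hgram {f g : ℝ → E n} {x y : E n} {a : ℝ} {q : ℝ → ℝ}
      (hf : Tendsto (fun t => T t (f t)) l (𝓝 x)) (hg : Tendsto (fun t => T t (g t)) l (𝓝 y))
      (hq : Tendsto q l (𝓝 a)) (hfg : ∀ t ∈ s, t ≠ 0 → mink (f t) (g t) = q t) :
      mink x y = a := by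
    refine tendsto_nhds_unique ((tendsto_mink hf hg).congr' ?_) hq
    filter_upwards [hl (nhdsWithin_le_nhds (h.isOpen.eventually_mem h0)), hl hT,
      hl self_mem_nhdsWithin] with t ht hTt ht0
    rw [hTt, hfg t ht (ne_of_gt ht0)]
  exact
    { mink₁₁ := hgram hcos hcos (by simpa using hdefect.const_add 1)
        fun t ht ht0 => h.mink_cosVec_cosVec ht ht0 hw.ne'
      mink₂₂ := hgram hsin hsin tendsto_const_nhds fun t ht _ => h.mink_sinVec_sinVec ht
      mink₃₃ := hgram haxis haxis (by simpa using hdefect.const_add (-1))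
        fun t ht ht0 => h.mink_axisVec_axisVec ht ht0 hw.ne'
      mink₁₂ := hgram hcos hsin tendsto_const_nhds fun t ht ht0 => h.mink_cosVec_sinVec ht ht0
      mink₁₃ := mink_comm u₃ u₁ ▸ hgram haxis hcos (by simpa using hdefect.neg)
        fun t ht ht0 => h.mink_axisVec_cosVec ht ht0 hw.ne'
      mink₂₃ := mink_comm u₃ u₂ ▸ hgram haxis hsin tendsto_const_nhds
        fun t ht ht0 => h.mink_axisVec_sinVec ht ht0 }

end IsFlatLiftOn

lemma tendsto_smul_map_sub_lightCircle {u₁ u₂ u₃ : E n}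
    (hlim : Tendsto (unwoundFrame w c T) (𝓝[>] 0) (𝓝 (u₁, u₂, u₃))) :
    Tendsto (fun t => (w / t) • T t (c t) - lightCircle u₁ u₂ u₃ (Circle.exp (w * Real.log t)))
      (𝓝[>] 0) (𝓝 0) := by
  have h₁ := (tendsto_sub_nhds_zero_iff.2 hlim.fst_nhds).norm
  have h₂ := (tendsto_sub_nhds_zero_iff.2 hlim.snd_nhds.fst_nhds).norm
  have h₃ := (tendsto_sub_nhds_zero_iff.2 hlim.snd_nhds.snd_nhds).norm
  refine squeeze_zero_norm (fun t => ?_) (by simpa using (h₁.add h₂).add h₃)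
  set U := unwoundFrame w c T t with hU
  have hsplit : (w / t) • T t (c t) - lightCircle u₁ u₂ u₃ (Circle.exp (w * Real.log t))
      = Real.cos (w * Real.log t) • (U.1 - u₁) + Real.sin (w * Real.log t) • (U.2.1 - u₂)
        + (U.2.2 - u₃) := by
    rw [← map_smul, div_smul_eq_cosVec_add_axisVec, map_add, map_cosVec_eq w, lightCircle_exp, hU]
    simp only [unwoundFrame]
    module
  rw [hsplit]
  exact norm_add₃_le.trans <| add_le_add_left
    (add_le_add (norm_cos_smul_le _ _) (norm_sin_smul_le _ _)) _

end FrameLimit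

section ProjectiveAccumulation

lemma exists_eq_smul_of_tendsto_smul {F : Type*} [NormedAddCommGroup F] [InnerProductSpace ℝ F]
    {α : Type*} {l : Filter α} [NeBot l] {G : α → F} {σ : α → ℝ} {g x : F} (hg : g ≠ 0)
    (hG : Tendsto G l (𝓝 g)) (hσ : Tendsto (fun i => σ i • G i) l (𝓝 x)) :
    ∃ r : ℝ, x = r • g := by
  have hgg : inner ℝ g g ≠ 0 := inner_self_ne_zero.2 hg
  have hGG := hG.inner (𝕜 := ℝ) hG
  have hcoeff : Tendsto σ l (𝓝 (inner ℝ g x / inner ℝ g g)) := by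
    refine ((hG.inner (𝕜 := ℝ) hσ).div hGG hgg).congr' ?_
    filter_upwards [hGG.eventually_ne hgg] with i hi
    rw [Pi.div_apply, inner_smul_right, mul_div_cancel_right₀ _ hi]
  exact ⟨_, tendsto_nhds_unique hσ (hcoeff.smul hG)⟩

variable {b w : ℝ} {γ : ℝ → E n} {ρ : ℝ → ℝ} {k : Circle → E n} {x : E n}

variable (hk : Continuous k) (hk0 : ∀ z, k z ≠ 0) (hρ : ∀ᶠ t in 𝓝[>] 0, ρ t ≠ 0)
  (hγ : Tendsto (fun t => ρ t • γ t - k (Circle.exp (w * Real.log t))) (𝓝[>] 0) (𝓝 0))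

include hk hγ

lemma tendsto_smul_of_tendsto_exp_mul_log {α : Type*} {l : Filter α} {ts : α → ℝ} {z : Circle}
    (hts : Tendsto ts l (𝓝[>] 0))
    (hz : Tendsto (fun i => Circle.exp (w * Real.log (ts i))) l (𝓝 z)) :
    Tendsto (fun i => ρ (ts i) • γ (ts i)) l (𝓝 (k z)) := by
  simpa using (hγ.comp hts).add ((hk.tendsto z).comp hz)

include hk0 hρ

lemma exists_eq_smul_of_tendsto_exp_mul_log {α : Type*} {l : Filter α} [NeBot l] {ts r : α → ℝ}
    {z : Circle} (hts : Tendsto ts l (𝓝[>] 0))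
    (hz : Tendsto (fun i => Circle.exp (w * Real.log (ts i))) l (𝓝 z))
    (hx : Tendsto (fun i => r i • γ (ts i)) l (𝓝 x)) : ∃ a : ℝ, x = a • k z := by
  refine exists_eq_smul_of_tendsto_smul (σ := fun i => r i / ρ (ts i)) (hk0 z)
    (tendsto_smul_of_tendsto_exp_mul_log hk hγ hts hz) (hx.congr' ?_)
  filter_upwards [hts hρ] with i hi
  rw [smul_smul, div_mul_cancel₀ _ hi]

theorem forall_exists_eq_smul_of_tendsto (hw : 0 < w) {r : ℝ → ℝ}
    (hx : Tendsto (fun t => r t • γ t) (𝓝[>] 0) (𝓝 x)) (z : Circle) :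
    ∃ a : ℝ, x = a • k z := by
  have := neBot_nhdsGT_inf_exp_mul_log_eq hw z
  set l := 𝓝[>] 0 ⊓ 𝓟 {t | Circle.exp (w * Real.log t) = z}
  have hz : Tendsto (fun t => Circle.exp (w * Real.log t)) l (𝓝 z) :=
    tendsto_nhds_of_eventually_eq (mem_inf_of_right (mem_principal_self _))
  exact exists_eq_smul_of_tendsto_exp_mul_log hk hk0 hρ hγ (ts := id) inf_le_left hz
    (hx.mono_left inf_le_left)

theorem projAccum_iff_exists_eq_smul (hb : 0 < b) (hw : 0 < w) :
    projAccum b γ x ↔ ∃ (r : ℝ) (z : Circle), x = r • k z := by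
  constructor
  · rintro ⟨ts, rs, hmem, hts, hx⟩
    have hts : Tendsto ts atTop (𝓝[>] 0) :=
      tendsto_nhdsWithin_iff.2 ⟨hts, .of_forall fun i => (hmem i).1⟩
    obtain ⟨z, φ, hφ, hz⟩ :=
      CompactSpace.tendsto_subseq fun i => Circle.exp (w * Real.log (ts i))
    obtain ⟨r, hr⟩ := exists_eq_smul_of_tendsto_exp_mul_log hk hk0 hρ hγ
      (hts.comp hφ.tendsto_atTop) hz (hx.comp hφ.tendsto_atTop)
    exact ⟨r, z, hr⟩
  · rintro ⟨r, z, rfl⟩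
    obtain ⟨ts, hts, hts'⟩ := exists_seq_forall_of_frequently
      ((frequently_exp_mul_log_eq hw z).and_eventually (Ioo_mem_nhdsGT hb))
    refine ⟨ts, fun i => r * ρ (ts i), fun i => (hts' i).2, hts.mono_right nhdsWithin_le_nhds, ?_⟩
    simp only [mul_smul]
    exact (tendsto_smul_of_tendsto_exp_mul_log hk hγ hts <|
      tendsto_const_nhds.congr fun i => (hts' i).1.symm).const_smul r

end ProjectiveAccumulation

theorem stmt16_general {n : ℕ} (ε b : ℝ) (hε : 0 < ε)
    (c : ℝ → E n) (hc : ContDiffOn ℝ 3 c (Set.Ioo (-ε) b))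
    (hcnull : ∀ t ∈ Set.Ioo (-ε) b, mink (c t) (c t) = 0)
    (hcreg : ∀ t ∈ Set.Ioo (-ε) b, mink (deriv c t) (deriv c t) = 1)
    (lam : ℝ) (hlam : 1 < 2 * lam)
    (p : ℝ) (hp : p ∈ Set.Ioo (0 : ℝ) b)
    (T : ℝ → E n →L[ℝ] E n) (hTp : T p = 1)
    (hT : ∀ t ∈ Set.Ioo (0 : ℝ) b,
      HasDerivAt T ((lam / t ^ 2) • (T t * wedge (c t) (deriv c t))) t) :
    (¬ ∃ x : E n, x ≠ 0 ∧ ∃ r : ℝ → ℝ, (∀ t ∈ Set.Ioo (0 : ℝ) b, r t ≠ 0) ∧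
        Tendsto (fun t : ℝ => r t • (T t) (c t)) (𝓝[>] 0) (𝓝 x)) ∧
    ∃ (u₁ u₂ u₃ : E n) (W : Submodule ℝ (E n)),
      W = Submodule.span ℝ ({u₁, u₂, u₃} : Set (E n)) ∧
      Module.finrank ℝ W = 3 ∧
      mink u₁ u₁ = 1 ∧ mink u₂ u₂ = 1 ∧ mink u₃ u₃ = -1 ∧
      mink u₁ u₂ = 0 ∧ mink u₁ u₃ = 0 ∧ mink u₂ u₃ = 0 ∧
      ∀ x : E n, x ≠ 0 →
        (projAccum b (fun t => (T t) (c t)) x ↔ (x ∈ W ∧ mink x x = 0)) := by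
  have hb : 0 < b := hp.1.trans hp.2
  obtain ⟨w, hw, rfl⟩ : ∃ w, 0 < w ∧ lam = (w ^ 2 + 1) / 2 :=
    ⟨√(2 * lam - 1), Real.sqrt_pos.2 (by linarith), by
      rw [Real.sq_sqrt (by linarith), sub_add_cancel, mul_div_cancel_left₀ _ two_ne_zero]⟩
  have hflat : IsFlatLiftOn c (Ioo (-ε) b) := ⟨isOpen_Ioo, hc, hcnull, hcreg⟩
  have h0 : (0 : ℝ) ∈ Ioo (-ε) b := ⟨neg_lt_zero.2 hε, hb⟩
  have hnear : ∀ᶠ t in 𝓝[>] 0, t ∈ Ioo 0 b := Ioo_mem_nhdsGT hb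
  have hiso : ∀ t ∈ Ioo 0 b, ∀ x y, mink (T t x) (T t y) = mink x y := fun _ =>
    mink_map_map_of_hasDerivAt_smul_mul_wedge isOpen_Ioo isPreconnected_Ioo hp hTp hT
  obtain ⟨⟨u₁, u₂, u₃⟩, hlim⟩ := hflat.exists_tendsto_unwoundFrame h0 hw (hnear.mono hT)
  have hu : IsLorentzFrame u₁ u₂ u₃ :=
    hflat.isLorentzFrame_of_tendsto_unwoundFrame h0 hw (hnear.mono hiso) hlim
  have hγ := tendsto_smul_map_sub_lightCircle hlim
  have hρ : ∀ᶠ t in 𝓝[>] 0, w / t ≠ 0 := hnear.mono fun t ht => (div_pos hw ht.1).ne'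
  refine ⟨?_, u₁, u₂, u₃, _, rfl, hu.finrank_span, hu.mink₁₁, hu.mink₂₂, hu.mink₃₃, hu.mink₁₂,
    hu.mink₁₃, hu.mink₂₃, fun x _ => ?_⟩
  · rintro ⟨x, hx, r, -, hr⟩
    exact hx <| hu.eq_zero_of_forall_exists_eq_smul <| forall_exists_eq_smul_of_tendsto
      continuous_lightCircle hu.lightCircle_ne_zero hρ hγ hw hr
  · rw [hu.mem_span_and_null_iff]
    exact projAccum_iff_exists_eq_smul continuous_lightCircle hu.lightCircle_ne_zero hρ hγ hb hw

/-- Theorem 5.4: for 1−2λ < 0 the Calapso transform has no limit point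
at 0 but a limit circle. -/
theorem stmt16 {n : ℕ} (ε b : ℝ) (hε : 0 < ε) (hb : 0 < b)
    (c : ℝ → E n) (hc : ContDiffOn ℝ (⊤ : ℕ∞) c (Set.Ioo (-ε) b))
    (hcnull : ∀ t ∈ Set.Ioo (-ε) b, mink (c t) (c t) = 0)
    (hcne : ∀ t ∈ Set.Ioo (-ε) b, c t ≠ 0)
    (hcreg : ∀ t ∈ Set.Ioo (-ε) b, mink (deriv c t) (deriv c t) = 1)
    (lam : ℝ) (hlam : 1 < 2 * lam)
    (p : ℝ) (hp : p ∈ Set.Ioo (0:ℝ) b)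
    (T : ℝ → E n →L[ℝ] E n) (hTp : T p = 1)
    (hT : ∀ t ∈ Set.Ioo (0:ℝ) b,
      HasDerivAt T ((lam / t ^ 2) • (T t * wedge (c t) (deriv c t))) t) :
    (¬ ∃ x : E n, x ≠ 0 ∧ ∃ r : ℝ → ℝ, (∀ t ∈ Set.Ioo (0:ℝ) b, r t ≠ 0) ∧
        Tendsto (fun t : ℝ => r t • (T t) (c t)) (𝓝[>] 0) (𝓝 x)) ∧
    ∃ (u₁ u₂ u₃ : E n) (W : Submodule ℝ (E n)),
      W = Submodule.span ℝ ({u₁, u₂, u₃} : Set (E n)) ∧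
      Module.finrank ℝ W = 3 ∧
      mink u₁ u₁ = 1 ∧ mink u₂ u₂ = 1 ∧ mink u₃ u₃ = -1 ∧
      mink u₁ u₂ = 0 ∧ mink u₁ u₃ = 0 ∧ mink u₂ u₃ = 0 ∧
      ∀ x : E n, x ≠ 0 →
        (projAccum b (fun t => (T t) (c t)) x ↔ (x ∈ W ∧ mink x x = 0)) :=
  stmt16_general ε b hε c (hc.of_le (by norm_cast)) hcnull hcreg lam hlam p hp T hTp hT
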